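/- Let V be a finite-dimensional real inner product space with symmetric positive definite form a and subspaces V₀,...,V_N with V = Σᵢ Vᵢ. Suppose there is a coloring: a partition of {0,...,N} into n classes such that subspaces in the same class are mutually a-orthogonal. Then the additive Schwarz operator P = Σᵢ Pᵢ (Pᵢ the a-orthogonal projection onto Vᵢ) satisfies a(Pv, v) ≤ n a(v,v) for all v ∈ V, i.e., the largest eigenvalue of P is at most n. -/

import Mathlib

/-! A sum of projections onto mutually orthogonal subspaces is again a projection, so grouping the
summands by color writes the additive Schwarz operator as a sum of one projection per color. Each
projection `p` satisfies `B (p v) v ≤ B v v`, because the difference is the energy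
`B (v - p v) (v - p v)` of the error. -/

section Projection

variable {R V : Type*} [CommRing R] [AddCommGroup V] [Module R V]

/-- `p` is a projection onto `W` in the sense of Galerkin approximation with respect to `B`: the
error `v - p v` is `B`-orthogonal to the test space `W`. For symmetric positive definite `B` this is
the `B`-orthogonal projection onto `W`. -/
structure IsGalerkinProjection (B : V →ₗ[R] V →ₗ[R] R) (W : Submodule R V) (p : V →ₗ[R] V) :
    Prop where
  mem : ∀ v, p v ∈ W
  apply_eq : ∀ v, ∀ w ∈ W, B (p v) w = B v w

/-- A coloring of the indices that lets the projections of one color be added up to a projection: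
two distinct indices of the same color have `B`-orthogonal subspaces. -/
def IsOrthogonalColoring {ι κ : Type*} (B : V →ₗ[R] V →ₗ[R] R) (W : ι → Submodule R V)
    (c : ι → κ) : Prop :=
  ∀ i j, i ≠ j → c i = c j → ∀ u ∈ W i, ∀ w ∈ W j, B u w = 0

variable {B : V →ₗ[R] V →ₗ[R] R}

namespace IsGalerkinProjection

theorem apply_error_error {W : Submodule R V} {p : V →ₗ[R] V} (hp : IsGalerkinProjection B W p)
    (v : V) : B (v - p v) (v - p v) = B v v - B (p v) v := by
  have galerkin_orthogonality : B (v - p v) (p v) = 0 := by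
    rw [LinearMap.map_sub₂, hp.apply_eq v _ (hp.mem v), sub_self]
  rw [map_sub, galerkin_orthogonality, sub_zero, LinearMap.map_sub₂]

theorem apply_self_le [PartialOrder R] [IsOrderedAddMonoid R] {W : Submodule R V} {p : V →ₗ[R] V}
    (hp : IsGalerkinProjection B W p) (hB : B.IsNonneg) (v : V) : B (p v) v ≤ B v v :=
  sub_nonneg.mp <| hp.apply_error_error v ▸ hB.nonneg (v - p v)

theorem sum {ι : Type*} {W : ι → Submodule R V} {p : ι → V →ₗ[R] V} {s : Finset ι}
    (hp : ∀ i ∈ s, IsGalerkinProjection B (W i) (p i))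
    (hW : ∀ i ∈ s, ∀ j ∈ s, i ≠ j → ∀ u ∈ W i, ∀ w ∈ W j, B u w = 0) :
    IsGalerkinProjection B (⨆ i ∈ s, W i) (∑ i ∈ s, p i) where
  mem v := by
    rw [LinearMap.sum_apply]
    exact Submodule.sum_mem_biSup fun i hi => (hp i hi).mem v
  apply_eq v := by
    suffices h : ⨆ j ∈ s, W j ≤ LinearMap.eqLocus (B ((∑ i ∈ s, p i) v)) (B v) from
      fun w hw => h hw
    refine iSup₂_le fun j hj w hw => ?_
    calc B ((∑ i ∈ s, p i) v) w = ∑ i ∈ s, B (p i v) w := by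
          rw [LinearMap.sum_apply, LinearMap.map_sum₂]
      _ = B (p j v) w := Finset.sum_eq_single_of_mem j hj fun i hi hij =>
          hW i hi j hj hij _ ((hp i hi).mem v) w hw
      _ = B v w := (hp j hj).apply_eq v w hw

end IsGalerkinProjection

theorem IsOrthogonalColoring.isGalerkinProjection_sum_fiber {ι κ : Type*} [Fintype ι]
    [DecidableEq κ] {W : ι → Submodule R V} {p : ι → V →ₗ[R] V} {c : ι → κ}
    (hc : IsOrthogonalColoring B W c) (hp : ∀ i, IsGalerkinProjection B (W i) (p i)) (k : κ) :
    IsGalerkinProjection B (⨆ (i) (_ : c i = k), W i) (∑ i with c i = k, p i) := by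
  have orthogonal_of_mem_fiber : ∀ i ∈ ({i | c i = k} : Finset ι), ∀ j ∈ ({i | c i = k} : Finset ι),
      i ≠ j → ∀ u ∈ W i, ∀ w ∈ W j, B u w = 0 := by
    simp only [Finset.mem_filter_univ]
    exact fun i hi j hj hij => hc i j hij (hi.trans hj.symm)
  simpa only [Finset.mem_filter_univ] using
    IsGalerkinProjection.sum (fun i _ => hp i) orthogonal_of_mem_fiber

theorem stmt2_general [PartialOrder R] [IsOrderedAddMonoid R] {ι κ : Type*} [Fintype ι]
    [Fintype κ] (hB : B.IsNonneg) {W : ι → Submodule R V} {p : ι → V →ₗ[R] V}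
    (hp : ∀ i, IsGalerkinProjection B (W i) (p i)) {c : ι → κ}
    (hc : IsOrthogonalColoring B W c) (v : V) :
    B ((∑ i, p i) v) v ≤ Fintype.card κ * B v v := by
  classical
  calc B ((∑ i, p i) v) v = B ((∑ k, ∑ i with c i = k, p i) v) v := by
        rw [Finset.sum_fiberwise _ c p]
    _ = ∑ k, B ((∑ i with c i = k, p i) v) v := by
        rw [LinearMap.sum_apply, LinearMap.map_sum₂]
    _ ≤ ∑ _k : κ, B v v :=
        Finset.sum_le_sum fun k _ => (hc.isGalerkinProjection_sum_fiber hp k).apply_self_le hB v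
    _ = Fintype.card κ * B v v := by
        rw [Finset.sum_const, Finset.card_univ, nsmul_eq_mul]

end Projection

theorem isNonneg_of_pos {R V : Type*} [CommSemiring R] [Preorder R] [AddCommMonoid V] [Module R V]
    {B : V →ₗ[R] V →ₗ[R] R} (hB : ∀ v, v ≠ 0 → 0 < B v v) : B.IsNonneg where
  nonneg v := by
    obtain rfl | hv := eq_or_ne v 0
    · rw [map_zero]
    · exact (hB v hv).le

theorem stmt2 {V : Type*} [AddCommGroup V] [Module ℝ V] [FiniteDimensional ℝ V]
    (a : V →ₗ[ℝ] V →ₗ[ℝ] ℝ)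
    (hsymm : ∀ u v, a u v = a v u)
    (hpos : ∀ v : V, v ≠ 0 → 0 < a v v)
    (N : ℕ) (Vs : Fin (N + 1) → Submodule ℝ V)
    (hspan : (⨆ i, Vs i) = ⊤)
    (Pi : Fin (N + 1) → V →ₗ[ℝ] V)
    (hPi_mem : ∀ i v, Pi i v ∈ Vs i)
    (hPi_proj : ∀ i v, ∀ w ∈ Vs i, a (Pi i v) w = a v w)
    (P : V →ₗ[ℝ] V) (hP : P = ∑ i, Pi i)
    (n : ℕ) (c : Fin (N + 1) → Fin n)
    (hcolor : ∀ i j, i ≠ j → c i = c j →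
      ∀ u ∈ Vs i, ∀ w ∈ Vs j, a u w = 0) :
    ∀ v : V, a (P v) v ≤ (n : ℝ) * a v v := by
  simpa only [hP, Fintype.card_fin] using
    stmt2_general (isNonneg_of_pos hpos) (fun i => ⟨hPi_mem i, hPi_proj i⟩) hcolor
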